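/- Let h, ℓ ∈ S be homogeneous polynomials of degrees 1 and 3 respectively with no common zeros along Y. Then there is a (necessarily unique) S-module homomorphism u from the ideal (x, y³) to S/(x,y) satisfying u(x) = h + (x,y) and u(y³) = ℓ + (x,y), and the kernel of u is exactly the ideal (x², xy, y⁴, xℓ − y³h), regarded as an S-submodule of (x, y³). (This kernel is the saturated ideal of a multiplicity-four structure Z₁ on the line Y with arithmetic genus 0, an extremal curve in H(4,0).) -/

import Mathlib

open MvPolynomial

/-- The pair `(h, ℓ)` has no common zeros along the line `Y = {x = y = 0}`. -/
def NoCommonZerosAlongY {k : Type*} [Field k] (h ℓ : MvPolynomial (Fin 4) k) : Prop :=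
  ∀ c d : k, (c, d) ≠ (0, 0) → eval ![0, 0, c, d] h ≠ 0 ∨ eval ![0, 0, c, d] ℓ ≠ 0

lemma aux_scale {k : Type*} [Field k] {n : ℕ} {f : MvPolynomial (Fin 4) k}
    (hf : f.IsHomogeneous n) (P : Fin 4 → k) (t : k) :
    eval (fun i => t * P i) f = t ^ n * eval P f := by
  rw [eval_eq, eval_eq, Finset.mul_sum]
  refine Finset.sum_congr rfl fun d hd => ?_
  simp_rw [mul_pow, Finset.prod_mul_distrib]
  rw [Finset.prod_pow_eq_pow_sum, ← hf.degree_eq_sum_deg_support hd]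
  ring

lemma aux_lin {k : Type*} [Field k] {h : MvPolynomial (Fin 4) k} (hh : h.IsHomogeneous 1) :
    ∃ α β : k, h - (C α * X 2 + C β * X 3) ∈
      (Ideal.span {X 0, X 1} : Ideal (MvPolynomial (Fin 4) k)) := by
  have h1 : h ∈ homogeneousSubmodule (Fin 4) k 1 := hh
  rw [homogeneousSubmodule_one_eq_span_X] at h1
  induction h1 using Submodule.span_induction with
  | mem x hx =>
    obtain ⟨i, rfl⟩ := hx
    fin_cases i
    · exact ⟨0, 0, by simpa using Ideal.subset_span (by simp)⟩
    · exact ⟨0, 0, by simpa using Ideal.subset_span (by simp)⟩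
    · exact ⟨1, 0, by simp⟩
    · exact ⟨0, 1, by simp⟩
  | zero => exact ⟨0, 0, by simp⟩
  | add x y hx hy ihx ihy =>
    obtain ⟨a, b, h1⟩ := ihx ((mem_homogeneousSubmodule _ _).1
      (by rw [homogeneousSubmodule_one_eq_span_X]; exact hx))
    obtain ⟨c, d, h2⟩ := ihy ((mem_homogeneousSubmodule _ _).1
      (by rw [homogeneousSubmodule_one_eq_span_X]; exact hy))
    refine ⟨a + c, b + d, ?_⟩
    convert Ideal.add_mem _ h1 h2 using 1
    simp only [map_add]; ring
  | smul r x hx ih =>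
    obtain ⟨a, b, h1⟩ := ih ((mem_homogeneousSubmodule _ _).1
      (by rw [homogeneousSubmodule_one_eq_span_X]; exact hx))
    refine ⟨r * a, r * b, ?_⟩
    convert Ideal.mul_mem_left _ (C r) h1 using 1
    simp only [map_mul, smul_eq_C_mul]; ring

/-- An algebra endomorphism which is the identity on variables modulo `I` is so on everything. -/
lemma aux_congr {k : Type*} [Field k] (I : Ideal (MvPolynomial (Fin 4) k))
    (g : MvPolynomial (Fin 4) k →ₐ[k] MvPolynomial (Fin 4) k)
    (hg : ∀ i, X i - g (X i) ∈ I) (f : MvPolynomial (Fin 4) k) : f - g f ∈ I := by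
  have : Ideal.Quotient.mkₐ k I = (Ideal.Quotient.mkₐ k I).comp g := by
    apply MvPolynomial.algHom_ext
    intro i
    exact Ideal.Quotient.eq.2 (hg i)
  exact Ideal.Quotient.eq.1 (DFunLike.congr_fun this f)

lemma aux_eval {k : Type*} [Field k] {f : MvPolynomial (Fin 4) k}
    (hf : f ∈ (Ideal.span {X 0, X 1} : Ideal (MvPolynomial (Fin 4) k))) (c d : k) :
    eval ![0, 0, c, d] f = 0 := by
  obtain ⟨a, b, rfl⟩ := Ideal.mem_span_pair.1 hf
  simp

lemma aux_prime {k : Type*} [Field k] {f g : MvPolynomial (Fin 4) k}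
    (hfg : f * g ∈ (Ideal.span {X 0, X 1} : Ideal (MvPolynomial (Fin 4) k)))
    (hg : g ∉ (Ideal.span {X 0, X 1} : Ideal (MvPolynomial (Fin 4) k))) :
    f ∈ (Ideal.span {X 0, X 1} : Ideal (MvPolynomial (Fin 4) k)) := by
  let π : MvPolynomial (Fin 4) k →ₐ[k] MvPolynomial (Fin 4) k := aeval ![0, 0, X 2, X 3]
  have hx : (X 0 : MvPolynomial (Fin 4) k) ∈ Ideal.span {X 0, X 1} := Ideal.subset_span (by simp)
  have hy : (X 1 : MvPolynomial (Fin 4) k) ∈ Ideal.span {X 0, X 1} := Ideal.subset_span (by simp)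
  have key : ∀ f, π f = 0 ↔ f ∈ (Ideal.span {X 0, X 1} : Ideal (MvPolynomial (Fin 4) k)) := by
    intro f
    constructor
    · intro h0
      have := aux_congr (Ideal.span {X 0, X 1}) π (by
        intro i
        fin_cases i
        · simpa [π] using hx
        · simpa [π] using hy
        · simp [π]
        · simp [π]) f
      simpa [h0] using this
    · intro hf
      obtain ⟨a, b, rfl⟩ := Ideal.mem_span_pair.1 hf
      simp [π]
  rw [← key] at *
  rw [map_mul] at hfg
  exact (mul_eq_zero.1 hfg).resolve_right hg

lemma aux_root {k : Type*} [Field k] [IsAlgClosed k] {ℓ : MvPolynomial (Fin 4) k}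
    (hℓ : ℓ.IsHomogeneous 3) : ∃ c d : k, (c, d) ≠ (0, 0) ∧ eval ![0, 0, c, d] ℓ = 0 := by
  let p : Polynomial k := aeval ![0, 0, Polynomial.X, 1] ℓ
  let q : Polynomial k := aeval ![0, 0, 1, Polynomial.X] ℓ
  have hp : ∀ t, p.eval t = eval ![0, 0, t, 1] ℓ := by
    intro t
    have : ((Polynomial.aeval t).comp (aeval ![0, 0, Polynomial.X, 1]) :
        MvPolynomial (Fin 4) k →ₐ[k] k) = aeval ![0, 0, t, 1] := by
      apply MvPolynomial.algHom_ext
      intro i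
      fin_cases i <;> simp
    have := DFunLike.congr_fun this ℓ
    simpa [p, Polynomial.coe_aeval_eq_eval, MvPolynomial.coe_aeval_eq_eval] using this
  have hq : ∀ t, q.eval t = eval ![0, 0, 1, t] ℓ := by
    intro t
    have : ((Polynomial.aeval t).comp (aeval ![0, 0, 1, Polynomial.X]) :
        MvPolynomial (Fin 4) k →ₐ[k] k) = aeval ![0, 0, 1, t] := by
      apply MvPolynomial.algHom_ext
      intro i
      fin_cases i <;> simp
    have := DFunLike.congr_fun this ℓ
    simpa [q, Polynomial.coe_aeval_eq_eval, MvPolynomial.coe_aeval_eq_eval] using this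
  by_cases hd : p.degree = 0
  · rw [Polynomial.eq_C_of_degree_eq_zero hd] at hp
    set c := p.coeff 0
    have hqe : q = Polynomial.C c * Polynomial.X ^ 3 := by
      apply Polynomial.eq_of_infinite_eval_eq
      refine Set.Infinite.mono (s := {0}ᶜ) ?_ (Set.finite_singleton (0 : k)).infinite_compl
      intro t ht
      have ht : t ≠ 0 := ht
      have h1 := aux_scale hℓ ![0, 0, t⁻¹, 1] t
      have h2 : (fun i => t * (![0, 0, t⁻¹, 1] : Fin 4 → k) i) = ![0, 0, 1, t] := by
        funext i
        fin_cases i <;> simp [ht]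
      rw [h2, ← hq, ← hp] at h1
      change Polynomial.eval t q = Polynomial.eval t (Polynomial.C c * Polynomial.X ^ 3)
      rw [h1, Polynomial.eval_C, Polynomial.eval_mul, Polynomial.eval_C, Polynomial.eval_pow,
        Polynomial.eval_X, mul_comm]
    refine ⟨1, 0, by simp, ?_⟩
    rw [← hq, hqe]
    simp
  · obtain ⟨t, ht⟩ := IsAlgClosed.exists_root p hd
    exact ⟨t, 1, by simp, by rw [← hp]; exact ht⟩

/-- Modulo `(x,y)`, the syzygies of `(h, ℓ)` are generated by the Koszul one. -/
lemma aux_koszul {k : Type*} [Field k] [IsAlgClosed k]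
    (h ℓ : MvPolynomial (Fin 4) k)
    (hh : h.IsHomogeneous 1) (hℓ : ℓ.IsHomogeneous 3)
    (hhℓ : NoCommonZerosAlongY h ℓ) (a b : MvPolynomial (Fin 4) k)
    (hab : a * h + b * ℓ ∈ (Ideal.span {X 0, X 1} : Ideal (MvPolynomial (Fin 4) k))) :
    ∃ c, a - c * ℓ ∈ (Ideal.span {X 0, X 1} : Ideal (MvPolynomial (Fin 4) k)) ∧
      b + c * h ∈ (Ideal.span {X 0, X 1} : Ideal (MvPolynomial (Fin 4) k)) := by
  have hx : (X 0 : MvPolynomial (Fin 4) k) ∈ Ideal.span {X 0, X 1} := Ideal.subset_span (by simp)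
  have hy : (X 1 : MvPolynomial (Fin 4) k) ∈ Ideal.span {X 0, X 1} := Ideal.subset_span (by simp)
  have hhY : h ∉ (Ideal.span {X 0, X 1} : Ideal (MvPolynomial (Fin 4) k)) := by
    intro hm
    obtain ⟨c, d, hcd, h0⟩ := aux_root hℓ
    rcases hhℓ c d hcd with h1 | h1
    · exact h1 (aux_eval hm c d)
    · exact h1 h0
  obtain ⟨α, β, hlin⟩ := aux_lin hh
  have hαβ : ¬ (α = 0 ∧ β = 0) := by
    rintro ⟨rfl, rfl⟩
    exact hhY (by simpa using hlin)
  have heval : ∀ c d, eval ![0, 0, c, d] h = α * c + β * d := by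
    intro c d
    have := aux_eval hlin c d
    simp at this
    linear_combination this
  have hne : eval ![0, 0, β, -α] ℓ ≠ 0 := by
    refine (hhℓ β (-α) (by simpa [and_comm] using hαβ)).resolve_left ?_
    rw [heval]
    simp only [ne_eq, not_not]; ring
  let I : Ideal (MvPolynomial (Fin 4) k) := Ideal.span {X 0, X 1} ⊔ Ideal.span {h}
  have hI1 : Ideal.span {X 0, X 1} ≤ I := le_sup_left
  have hhI : h ∈ I := (le_sup_right : _ ≤ I) (Ideal.mem_span_singleton_self h)
  have hlI : C α * X 2 + C β * X 3 ∈ I := by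
    convert I.sub_mem hhI (hI1 hlin) using 1
    ring
  let φ : MvPolynomial (Fin 4) k →ₐ[k] Polynomial k :=
    aeval ![0, 0, Polynomial.C β * Polynomial.X, Polynomial.C (-α) * Polynomial.X]
  have hφx : φ (X 0) = 0 := by simp [φ]
  have hφy : φ (X 1) = 0 := by simp [φ]
  have hφ0 : ∀ f ∈ (Ideal.span {X 0, X 1} : Ideal (MvPolynomial (Fin 4) k)), φ f = 0 := by
    intro f hf
    obtain ⟨a, b, rfl⟩ := Ideal.mem_span_pair.1 hf
    simp [hφx, hφy]
  have hφh : φ h = 0 := by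
    have := hφ0 _ hlin
    rw [map_sub, sub_eq_zero] at this
    rw [this]
    have h2 : ∀ c, φ (C c) = Polynomial.C c := fun c => by simp [φ, Polynomial.algebraMap_eq]
    simp only [map_add, map_mul, h2]
    simp [φ]
    ring
  have hφℓ : φ ℓ ≠ 0 := by
    intro h0
    apply hne
    have : ((Polynomial.aeval (1 : k)).comp φ : MvPolynomial (Fin 4) k →ₐ[k] k)
        = aeval ![0, 0, β, -α] := by
      apply MvPolynomial.algHom_ext
      intro i
      fin_cases i <;> simp [φ]
    have := DFunLike.congr_fun this ℓ
    simpa [h0, MvPolynomial.coe_aeval_eq_eval] using this.symm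
  have hφb : φ b = 0 := by
    have := hφ0 _ hab
    rw [map_add, map_mul, map_mul, hφh, mul_zero, zero_add] at this
    exact (mul_eq_zero.1 this).resolve_right hφℓ
  have hbI : b ∈ I := by
    obtain ⟨s, hs2, hs3⟩ : ∃ s : MvPolynomial (Fin 4) k,
        X 2 - C β * s ∈ I ∧ X 3 - C (-α) * s ∈ I := by
      by_cases hα : α = 0
      · have hβ : β ≠ 0 := fun hβ => hαβ ⟨hα, hβ⟩
        have e : C β * C β⁻¹ = (1 : MvPolynomial (Fin 4) k) := by
          rw [← C_mul, mul_inv_cancel₀ hβ, C_1]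
        refine ⟨C β⁻¹ * X 2, ?_, ?_⟩
        · rw [← mul_assoc, e]; simp
        · convert I.mul_mem_left (C β⁻¹) hlI using 1
          rw [C_neg]
          linear_combination (-X 3) * e
      · have e : C α * C α⁻¹ = (1 : MvPolynomial (Fin 4) k) := by
          rw [← C_mul, mul_inv_cancel₀ hα, C_1]
        refine ⟨- C α⁻¹ * X 3, ?_, ?_⟩
        · convert I.mul_mem_left (C α⁻¹) hlI using 1
          linear_combination (-X 2) * e
        · convert I.zero_mem using 1
          rw [C_neg]
          linear_combination (-X 3) * e
    have := aux_congr I ((Polynomial.aeval s).comp φ) (by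
      intro i
      fin_cases i
      · simpa [φ] using hI1 hx
      · simpa [φ] using hI1 hy
      · simpa [φ, MvPolynomial.algebraMap_eq] using hs2
      · simpa [φ, MvPolynomial.algebraMap_eq] using hs3) b
    simpa [hφb] using this
  obtain ⟨r, hr, t, ht, hrt⟩ := Submodule.mem_sup.1 hbI
  obtain ⟨c, rfl⟩ := Ideal.mem_span_singleton'.1 ht
  refine ⟨-c, ?_, ?_⟩
  · apply aux_prime (g := h) _ hhY
    convert Ideal.sub_mem _ hab (Ideal.mul_mem_right ℓ _ hr) using 1
    rw [← hrt]; ring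
  · convert hr using 1
    rw [← hrt]; ring

lemma aux_wd {k : Type*} [Field k] (a b : MvPolynomial (Fin 4) k)
    (hab : a * X 0 + b * X 1 ^ 3 = 0) :
    a ∈ (Ideal.span {X 0, X 1} : Ideal (MvPolynomial (Fin 4) k)) ∧
      b ∈ (Ideal.span {X 0, X 1} : Ideal (MvPolynomial (Fin 4) k)) := by
  have hp : Prime (X 0 : MvPolynomial (Fin 4) k) := X_prime
  have hd : (X 0 : MvPolynomial (Fin 4) k) ∣ b * X 1 ^ 3 := ⟨-a, by linear_combination hab⟩
  have hb : (X 0 : MvPolynomial (Fin 4) k) ∣ b := by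
    refine (hp.dvd_or_dvd hd).resolve_right fun h1 => ?_
    have := hp.dvd_of_dvd_pow h1
    simp [X_dvd_X] at this
  obtain ⟨e, rfl⟩ := hb
  have ha : a = - e * X 1 ^ 3 := by
    apply mul_right_cancel₀ hp.ne_zero
    linear_combination hab
  subst ha
  exact ⟨Ideal.mem_span_pair.2 ⟨0, -e * X 1 ^ 2, by ring⟩,
    Ideal.mem_span_pair.2 ⟨e, 0, by ring⟩⟩

/-- for `h, ℓ` homogeneous of degrees `1, 3` with no common zeros along
`Y`, there is a unique `S`-module homomorphism `u : (x, y³) → S/(x,y)` with `u(x) = h̄`,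
`u(y³) = ℓ̄`, and its kernel is the ideal `(x², xy, y⁴, xℓ − y³h)`, the saturated ideal
of an extremal multiplicity-four structure `Z₁` of genus `0` on `Y`. -/
theorem stmt_18 {k : Type*} [Field k] [IsAlgClosed k]
    (h ℓ : MvPolynomial (Fin 4) k)
    (hh : h.IsHomogeneous 1) (hℓ : ℓ.IsHomogeneous 3)
    (hhℓ : NoCommonZerosAlongY h ℓ) :
    ∃ u : (Ideal.span {X 0, X 1 ^ 3} : Ideal (MvPolynomial (Fin 4) k)) →ₗ[MvPolynomial (Fin 4) k]
        (MvPolynomial (Fin 4) k ⧸ (Ideal.span {X 0, X 1} : Ideal (MvPolynomial (Fin 4) k))),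
      (u ⟨X 0, Ideal.subset_span (by simp)⟩ = Ideal.Quotient.mk _ h ∧
        u ⟨X 1 ^ 3, Ideal.subset_span (by simp)⟩ = Ideal.Quotient.mk _ ℓ) ∧
      (∀ u' : (Ideal.span {X 0, X 1 ^ 3} : Ideal (MvPolynomial (Fin 4) k)) →ₗ[MvPolynomial (Fin 4) k]
          (MvPolynomial (Fin 4) k ⧸ (Ideal.span {X 0, X 1} : Ideal (MvPolynomial (Fin 4) k))),
        (u' ⟨X 0, Ideal.subset_span (by simp)⟩ = Ideal.Quotient.mk _ h ∧
          u' ⟨X 1 ^ 3, Ideal.subset_span (by simp)⟩ = Ideal.Quotient.mk _ ℓ) → u' = u) ∧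
      LinearMap.ker u = Submodule.comap
        (Submodule.subtype (Ideal.span {X 0, X 1 ^ 3} : Ideal (MvPolynomial (Fin 4) k)))
        (Ideal.span {X 0 ^ 2, X 0 * X 1, X 1 ^ 4, X 0 * ℓ - X 1 ^ 3 * h}) := by
  have hw : ∀ a b a' b' : MvPolynomial (Fin 4) k,
      a * X 0 + b * X 1 ^ 3 = a' * X 0 + b' * X 1 ^ 3 →
      (Ideal.Quotient.mk (Ideal.span {X 0, X 1} : Ideal (MvPolynomial (Fin 4) k)))
        (a * h + b * ℓ) = Ideal.Quotient.mk _ (a' * h + b' * ℓ) := by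
    intro a b a' b' he
    obtain ⟨h1, h2⟩ := aux_wd (a - a') (b - b') (by linear_combination he)
    rw [Ideal.Quotient.eq]
    convert Ideal.add_mem _ (Ideal.mul_mem_right h _ h1) (Ideal.mul_mem_right ℓ _ h2) using 1
    ring
  have hex : ∀ m : (Ideal.span {X 0, X 1 ^ 3} : Ideal (MvPolynomial (Fin 4) k)),
      ∃ a b, a * X 0 + b * X 1 ^ 3 = (m : MvPolynomial (Fin 4) k) :=
    fun m => Ideal.mem_span_pair.1 m.2
  choose A B hAB using hex
  let u : (Ideal.span {X 0, X 1 ^ 3} : Ideal (MvPolynomial (Fin 4) k)) →ₗ[MvPolynomial (Fin 4) k]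
        (MvPolynomial (Fin 4) k ⧸ (Ideal.span {X 0, X 1} : Ideal (MvPolynomial (Fin 4) k))) :=
    { toFun := fun m => Ideal.Quotient.mk _ (A m * h + B m * ℓ)
      map_add' := by
        intro m n
        rw [← map_add, hw (A (m + n)) (B (m + n)) (A m + A n) (B m + B n)]
        · congr 1; ring
        · rw [hAB, Submodule.coe_add, ← hAB m, ← hAB n]; ring
      map_smul' := by
        intro r m
        rw [hw (A (r • m)) (B (r • m)) (r * A m) (r * B m)]
        · change _ = Ideal.Quotient.mk _ (r * (A m * h + B m * ℓ))
          congr 1; ring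
        · rw [hAB, Submodule.coe_smul, smul_eq_mul, ← hAB m]; ring }
  have hu : ∀ (m : (Ideal.span {X 0, X 1 ^ 3} : Ideal (MvPolynomial (Fin 4) k))) a b,
      a * X 0 + b * X 1 ^ 3 = (m : MvPolynomial (Fin 4) k) →
      u m = Ideal.Quotient.mk _ (a * h + b * ℓ) := by
    intro m a b hm
    exact hw _ _ _ _ ((hAB m).trans hm.symm)
  refine ⟨u, ⟨?_, ?_⟩, ?_, ?_⟩
  · rw [hu _ 1 0 (by simp)]; simp
  · rw [hu _ 0 1 (by simp)]; simp
  · rintro u' ⟨h1, h2⟩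
    ext1 m
    rw [hu m _ _ (hAB m)]
    have hm : m = A m • (⟨X 0, Ideal.subset_span (by simp)⟩ :
          (Ideal.span {X 0, X 1 ^ 3} : Ideal (MvPolynomial (Fin 4) k))) +
        B m • ⟨X 1 ^ 3, Ideal.subset_span (by simp)⟩ := by
      apply Subtype.ext
      exact (hAB m).symm
    conv_lhs => rw [hm]
    rw [map_add, map_smul, map_smul, h1, h2]
    rfl
  · set J : Ideal (MvPolynomial (Fin 4) k) :=
      Ideal.span {X 0 ^ 2, X 0 * X 1, X 1 ^ 4, X 0 * ℓ - X 1 ^ 3 * h} with hJ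
    have j1 : X 0 ^ 2 ∈ J := Ideal.subset_span (by simp)
    have j2 : X 0 * X 1 ∈ J := Ideal.subset_span (by simp)
    have j3 : X 1 ^ 4 ∈ J := Ideal.subset_span (by simp)
    have j4 : X 0 * ℓ - X 1 ^ 3 * h ∈ J := Ideal.subset_span (by simp)
    ext m
    rw [LinearMap.mem_ker, Submodule.mem_comap, Submodule.subtype_apply]
    constructor
    · intro hm
      rw [hu m _ _ (hAB m), Ideal.Quotient.eq_zero_iff_mem] at hm
      obtain ⟨c, hc1, hc2⟩ := aux_koszul h ℓ hh hℓ hhℓ _ _ hm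
      obtain ⟨p, q, hpq⟩ := Ideal.mem_span_pair.1 hc1
      obtain ⟨r, s, hrs⟩ := Ideal.mem_span_pair.1 hc2
      have : (m : MvPolynomial (Fin 4) k) = p * X 0 ^ 2 + (q + r * X 1 ^ 2) * (X 0 * X 1)
          + s * X 1 ^ 4 + c * (X 0 * ℓ - X 1 ^ 3 * h) := by
        rw [← hAB m]
        linear_combination (- X 0) * hpq - X 1 ^ 3 * hrs
      rw [this]
      exact J.add_mem (J.add_mem (J.add_mem (J.mul_mem_left _ j1) (J.mul_mem_left _ j2))
        (J.mul_mem_left _ j3)) (J.mul_mem_left _ j4)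
    · intro hm
      simp only [hJ, Ideal.mem_span_insert, Ideal.mem_span_singleton'] at hm
      obtain ⟨a, _, ⟨b, _, ⟨c, _, ⟨d, rfl⟩, rfl⟩, rfl⟩, hm⟩ := hm
      rw [hu m (a * X 0 + b * X 1 + d * ℓ) (c * X 1 - d * h) (by rw [hm]; ring),
        Ideal.Quotient.eq_zero_iff_mem]
      exact Ideal.mem_span_pair.2 ⟨a * h, b * h + c * ℓ, by ring⟩
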